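/- arXiv:1703.07058 — 2 statements merged into one kernel-verified Lean document; each statement's English description precedes it below -/
import Mathlib

section
/- Let n, k, l be integers with 1 ≤ k ≤ l and 2l < n, and let L be the Laplacian matrix of the I-graph I(n,k,l). Let 𝒜 be the companion matrix of F(X) = (3X^k − X^{2k} − 1)(3X^l − X^{2l} − 1) − X^{k+l}. Then the Jacobian group Jac(I(n,k,l)) is isomorphic as an abelian group to the torsion subgroup of the cokernel ℤ^{2(k+l)} / im(𝒜^n − I). -/
open Polynomial

/-- The relation generating the I-graph `I(n,k,l)`: `u_i ~ u_{i+l}`, `v_i ~ v_{i+k}`,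
`u_i ~ v_i` (the left summand are the `u`'s with step `l`, the right summand the `v`'s
with step `k`). -/
def IRel (n k l : ℕ) : (ZMod n ⊕ ZMod n) → (ZMod n ⊕ ZMod n) → Prop
  | .inl i, .inl j => j = i + (l : ZMod n)
  | .inr i, .inr j => j = i + (k : ZMod n)
  | .inl i, .inr j => i = j
  | .inr _, .inl _ => False

/-- The I-graph `I(n,k,l)`. -/
def IGraph (n k l : ℕ) : SimpleGraph (ZMod n ⊕ ZMod n) :=
  SimpleGraph.fromRel (IRel n k l)

noncomputable instance (n k l : ℕ) : DecidableRel (IGraph n k l).Adj :=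
  fun _ _ => Classical.dec _

/-- The number of spanning trees of the I-graph `I(n,k,l)`. -/
noncomputable def tauI (n k l : ℕ) : ℕ :=
  Nat.card {H : (IGraph n k l).Subgraph // H.IsSpanning ∧ H.coe.IsTree}

/-- The Laplacian matrix `L = D - A` of the I-graph, with entries in `R`. -/
noncomputable def lapI (n k l : ℕ) [NeZero n] (R : Type) [AddGroupWithOne R] :
    Matrix (ZMod n ⊕ ZMod n) (ZMod n ⊕ ZMod n) R :=
  (IGraph n k l).lapMatrix R

/-- The cokernel of a square integer matrix, viewed as a `ℤ`-linear map. -/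
abbrev cokerM {m : Type} [Fintype m] [DecidableEq m] (M : Matrix m m ℤ) : Type :=
  (m → ℤ) ⧸ LinearMap.range M.mulVecLin

/-- The polynomial `F(X) = (3X^k - X^{2k} - 1)(3X^l - X^{2l} - 1) - X^{k+l}`. -/
noncomputable def FpolyI (k l : ℕ) : Polynomial ℤ :=
  (3 * X ^ k - X ^ (2 * k) - 1) * (3 * X ^ l - X ^ (2 * l) - 1) - X ^ (k + l)

/-- The companion matrix of a (monic, degree `s`) polynomial
`F = X^s + a_{s-1} X^{s-1} + ⋯ + a_0`: ones on the superdiagonal and last row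
`(-a_0, …, -a_{s-1})`. -/
noncomputable def companionM (F : Polynomial ℤ) (s : ℕ) : Matrix (Fin s) (Fin s) ℤ :=
  fun i j => if (i : ℕ) = s - 1 then -F.coeff j
    else if (j : ℕ) = (i : ℕ) + 1 then 1 else 0

/-- The Jacobian group of the I-graph `I(n,k,l)`: the torsion subgroup of the cokernel of
the Laplacian. -/
noncomputable def JacI (n k l : ℕ) [NeZero n] : AddSubgroup (cokerM (lapI n k l ℤ)) :=
  AddCommGroup.torsion (cokerM (lapI n k l ℤ))

/-!
Both cokernels are `ℤ[X] / (F, X^n - 1)`, and only the order in which the two relations are divided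
out differs. Multiplication by `X` on `ℤ[X] / (F)` has matrix `𝒜` in a suitable basis, so
`𝒜^n - 1` presents the quotient of `ℤ[X] / (F)` by `X^n - 1`. On the other side, functions on
`ℤ/n` form the group algebra `C = ℤ[X] / (X^n - 1)`, on which the Laplacian acts as the matrix
`[[q_l, -1], [-1, q_k]]` over `C` with `q_m = 3 - X^m - X^{-m}`. Its cokernel is
`C / (q_l q_k - 1)`, and `F` is the unit `X^{k+l}` times `q_l q_k - 1` in `C`.
-/

section Cokernels

variable {A : Type*} [CommRing A]

theorem exact_mul_mk (a : A) :
    Function.Exact (a * ·) (Ideal.Quotient.mk (Ideal.span {a})) := fun x => by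
  rw [Ideal.Quotient.eq_zero_iff_mem, Ideal.mem_span_singleton]
  exact ⟨fun ⟨y, hy⟩ => ⟨y, hy.symm⟩, fun ⟨y, hy⟩ => ⟨y, hy.symm⟩⟩

-- In the cokernel `(0, 1) = (a, 0)`, by the image of `(1, 0)`, so the second coordinate can be
-- eliminated.
theorem exact_mul_sub_swap_mk (a b : A) :
    Function.Exact (fun p : A × A => (a * p.1 - p.2, b * p.2 - p.1))
      (fun p => Ideal.Quotient.mk (Ideal.span {a * b - 1}) (p.1 + a * p.2)) := by
  rintro ⟨x, y⟩
  rw [Ideal.Quotient.eq_zero_iff_mem, Ideal.mem_span_singleton]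
  constructor
  · rintro ⟨c, hc⟩
    refine ⟨(b * c - y, c), Prod.ext ?_ ?_⟩
    · linear_combination -hc
    · ring
  · rintro ⟨⟨u, v⟩, huv⟩
    obtain ⟨rfl, rfl⟩ := Prod.ext_iff.mp huv
    exact ⟨v, by ring⟩

theorem exact_comp_of_semiconj {M N P : Type*} [Zero P] {f : M → M} {g : N → N} {ψ : N → P}
    {e : M → N} (he : e.Bijective) (hfg : Function.Semiconj e f g) (h : Function.Exact g ψ) :
    Function.Exact f (ψ ∘ e) := fun y => by
  refine (h (e y)).trans ⟨?_, fun ⟨x, hx⟩ => ⟨e x, by rw [← hfg, hx]⟩⟩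
  rintro ⟨z, hz⟩
  obtain ⟨x, rfl⟩ := he.surjective z
  exact ⟨x, he.injective (by rw [hfg, hz])⟩

end Cokernels

section AdjoinRootQuotient

variable {R : Type*} [CommRing R]

-- The range of `φ` contains `1` and is stable under `root g`, so `φ` is onto; a surjection onto a
-- free module of at least the same rank is injective.
theorem bijective_of_semiconj_root_mul [Nontrivial R] {M : Type*} [AddCommGroup M] [Module R M]
    [Module.Free R M] [Module.Finite R M] {g : R[X]} (hg : g.Monic)
    (hM : Module.finrank R M ≤ g.natDegree)
    {φ : M →ₗ[R] AdjoinRoot g} {T : M → M}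
    (hT : Function.Semiconj φ T (AdjoinRoot.root g * ·)) (h1 : 1 ∈ LinearMap.range φ) :
    Function.Bijective φ := by
  have hmk (p : R[X]) : AdjoinRoot.mk g p ∈ LinearMap.range φ := by
    induction p using Polynomial.induction_on with
    | C a =>
      rw [AdjoinRoot.mk_C, ← AdjoinRoot.algebraMap_eq, Algebra.algebraMap_eq_smul_one]
      exact Submodule.smul_mem _ a h1
    | add p q hp hq => rw [map_add]; exact add_mem hp hq
    | monomial m a ih =>
      obtain ⟨y, hy⟩ := ih
      exact ⟨T y, by simp [hT.eq, hy, pow_succ', mul_left_comm]⟩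
  have hsurj : Function.Surjective φ := fun c => by
    obtain ⟨p, rfl⟩ := AdjoinRoot.mk_surjective c
    exact hmk p
  have := hg.free_adjoinRoot
  have := hg.finite_adjoinRoot
  refine OrzechProperty.bijective_of_surjective_of_finrank_le φ hsurj (hM.trans_eq ?_)
  exact (finrank_quotient_span_eq_natDegree' hg).symm

/-- The iterated quotient `R[X] / (p, q)`, formed by dividing out `p` and `q` in either order. -/
noncomputable def adjoinRootQuotientComm (p q : R[X]) :
    AdjoinRoot p ⧸ Ideal.span {AdjoinRoot.mk p q} ≃+*
      AdjoinRoot q ⧸ Ideal.span {AdjoinRoot.mk q p} :=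
  have hspan (f g : R[X]) : (Ideal.span {g}).map (Ideal.Quotient.mk (Ideal.span {f}))
      = Ideal.span {Ideal.Quotient.mk (Ideal.span {f}) g} := by
    rw [Ideal.map_span, Set.image_singleton]
  (Ideal.quotEquivOfEq (hspan p q).symm).trans <|
    (DoubleQuot.quotQuotEquivComm (Ideal.span {p}) (Ideal.span {q})).trans <|
      (Ideal.quotEquivOfEq (hspan q p) : _ ≃+* (R[X] ⧸ Ideal.span {q}) ⧸ _)

end AdjoinRootQuotient

section Companion

open scoped Matrix

theorem coeff_divX_iterate {R : Type*} [Semiring R] (F : R[X]) (j m : ℕ) :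
    (divX^[j] F).coeff m = F.coeff (m + j) := by
  induction j generalizing m with
  | zero => rfl
  | succ j ih => rw [Function.iterate_succ_apply', coeff_divX, ih, add_right_comm, add_assoc]

theorem divX_iterate_succ_mul_X_add {R : Type*} [Semiring R] (F : R[X]) (j : ℕ) :
    divX^[j + 1] F * X + C (F.coeff j) = divX^[j] F := by
  simpa only [Function.iterate_succ_apply', coeff_divX_iterate, zero_add]
    using divX_mul_X_add (divX^[j] F)

theorem divX_iterate_natDegree {R : Type*} [Semiring R] {F : R[X]} (hF : F.Monic) :
    divX^[F.natDegree] F = 1 := by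
  ext m
  rw [coeff_divX_iterate, coeff_one]
  split_ifs with h
  · rw [h, zero_add, hF.coeff_natDegree]
  · exact coeff_eq_zero_of_natDegree_lt (by omega)

variable (F : ℤ[X]) (s : ℕ)

/-- The linear map sending the `j`-th standard basis vector to the class of the Horner polynomial
`X^{s-1-j} + a_{s-1} X^{s-2-j} + ⋯ + a_{j+1}` of `F = X^s + ⋯ + a_0`. It is in this basis, rather
than in the power basis, that the columns of `companionM F s` describe multiplication by `X`. -/
noncomputable def hornerMap : (Fin s → ℤ) →ₗ[ℤ] AdjoinRoot F :=
  Fintype.linearCombination ℤ fun j => AdjoinRoot.mk F (divX^[(j : ℕ) + 1] F)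

theorem hornerMap_single (j : Fin s) :
    hornerMap F s (Pi.single j 1) = AdjoinRoot.mk F (divX^[(j : ℕ) + 1] F) := by
  rw [hornerMap, Fintype.linearCombination_apply_single, one_smul]

theorem companionM_mulVec_single_zero :
    companionM F (s + 1) *ᵥ Pi.single 0 1 = -F.coeff 0 • Pi.single (Fin.last s) 1 := by
  ext i
  induction i using Fin.lastCases <;> simp [companionM, Fin.ext_iff, Pi.single_apply]

theorem companionM_mulVec_single_succ (j : Fin s) :
    companionM F (s + 1) *ᵥ Pi.single j.succ 1
      = Pi.single j.castSucc 1 - F.coeff (j + 1) • Pi.single (Fin.last s) 1 := by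
  ext i
  induction i using Fin.lastCases with
  | last => simp [companionM, j.castSucc_ne_last.symm]
  | cast i => simp [companionM, Pi.single_apply, Fin.ext_iff, i.is_lt.ne, eq_comm (a := (j : ℕ))]

variable {F s} (hF : F.Monic) (hs : F.natDegree = s + 1)

include hF hs

theorem hornerMap_single_last : hornerMap F (s + 1) (Pi.single (Fin.last s) 1) = 1 := by
  rw [hornerMap_single, Fin.val_last, ← hs, divX_iterate_natDegree hF, map_one]

theorem semiconj_hornerMap_companionM :
    Function.Semiconj (hornerMap F (s + 1)) (companionM F (s + 1) *ᵥ ·)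
      (AdjoinRoot.root F * ·) := by
  suffices h : hornerMap F (s + 1) ∘ₗ (companionM F (s + 1)).mulVecLin
      = LinearMap.mulLeft ℤ (AdjoinRoot.root F) ∘ₗ hornerMap F (s + 1) from LinearMap.congr_fun h
  refine (Pi.basisFun ℤ _).ext fun j => ?_
  have hrec := congrArg (AdjoinRoot.mk F) (divX_iterate_succ_mul_X_add F j)
  rw [map_add, map_mul, AdjoinRoot.mk_X, AdjoinRoot.mk_C] at hrec
  simp only [LinearMap.comp_apply, Pi.basisFun_apply, LinearMap.mulLeft_apply,
    Matrix.mulVecLin_apply, hornerMap_single _ _ j]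
  induction j using Fin.cases with
  | zero =>
    rw [companionM_mulVec_single_zero, map_smul, hornerMap_single_last hF hs]
    simp only [Fin.val_zero, Function.iterate_zero, id_eq, AdjoinRoot.mk_self, eq_intCast,
      neg_smul, zsmul_eq_mul, mul_one] at hrec ⊢
    linear_combination -hrec
  | succ j =>
    rw [companionM_mulVec_single_succ, map_sub, map_smul, hornerMap_single_last hF hs,
      hornerMap_single]
    simp only [Fin.val_succ, Fin.val_castSucc, eq_intCast, zsmul_eq_mul, mul_one] at hrec ⊢
    linear_combination -hrec

theorem bijective_hornerMap : Function.Bijective (hornerMap F (s + 1)) :=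
  bijective_of_semiconj_root_mul hF (by simp [hs]) (semiconj_hornerMap_companionM hF hs)
    ⟨_, hornerMap_single_last hF hs⟩

theorem semiconj_hornerMap_companionM_pow_sub_one (n : ℕ) :
    Function.Semiconj (hornerMap F (s + 1)) ((companionM F (s + 1) ^ n - 1) *ᵥ ·)
      (AdjoinRoot.mk F (X ^ n - 1) * ·) := by
  have hpow (y) : hornerMap F (s + 1) (companionM F (s + 1) ^ n *ᵥ y)
      = AdjoinRoot.root F ^ n * hornerMap F (s + 1) y := by
    induction n with
    | zero => simp
    | succ n ih =>
      rw [pow_succ', ← Matrix.mulVec_mulVec, semiconj_hornerMap_companionM hF hs, ih, pow_succ',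
        mul_assoc]
  intro y
  simp [Matrix.sub_mulVec, hpow, sub_mul]

/-- The cokernel of `𝒜^n - 1` is `ℤ[X] / (F, X^n - 1)`. -/
noncomputable def cokerCompanionEquiv (n : ℕ) :
    cokerM (companionM F (s + 1) ^ n - 1) ≃+
      AdjoinRoot F ⧸ Ideal.span {AdjoinRoot.mk F (X ^ n - 1)} :=
  let ψ : (Fin (s + 1) → ℤ) →ₗ[ℤ] AdjoinRoot F ⧸ Ideal.span {AdjoinRoot.mk F (X ^ n - 1)} :=
    (Ideal.Quotient.mkₐ ℤ _).toLinearMap ∘ₗ hornerMap F (s + 1)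
  have hψ : Function.Exact (companionM F (s + 1) ^ n - 1).mulVecLin ψ :=
    exact_comp_of_semiconj (e := hornerMap F (s + 1)) (bijective_hornerMap hF hs)
      (semiconj_hornerMap_companionM_pow_sub_one hF hs n) (exact_mul_mk _)
  (hψ.linearEquivOfSurjective
    (Ideal.Quotient.mk_surjective.comp (bijective_hornerMap hF hs).surjective)).toAddEquiv

end Companion

section Cyclic

variable {R : Type*} [CommRing R]

theorem root_X_pow_sub_one_pow (n : ℕ) : AdjoinRoot.root (X ^ n - 1 : R[X]) ^ n = 1 := by
  have h := AdjoinRoot.mk_self (f := (X ^ n - 1 : R[X]))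
  rwa [map_sub, map_pow, map_one, AdjoinRoot.mk_X, sub_eq_zero] at h

variable (n : ℕ) [NeZero n]

/-- The additive character `i ↦ x ^ i` of `ℤ/n`, where `x` is the class of `X` in
`R[X] / (X^n - 1)`. -/
noncomputable def rootChar : AddChar (ZMod n) (AdjoinRoot (X ^ n - 1 : R[X])) :=
  AddChar.zmodChar n (root_X_pow_sub_one_pow n)

theorem rootChar_natCast (a : ℕ) :
    rootChar n (a : ZMod n) = AdjoinRoot.root (X ^ n - 1 : R[X]) ^ a :=
  AddChar.zmodChar_apply' (root_X_pow_sub_one_pow n) a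

theorem rootChar_mul_rootChar_neg (i : ZMod n) : rootChar (R := R) n i * rootChar n (-i) = 1 := by
  rw [← AddChar.map_add_eq_mul, add_neg_cancel, AddChar.map_zero_eq_one]

/-- The identification of functions on `ℤ/n` with the group algebra `R[X] / (X^n - 1)`. -/
noncomputable def cyclicMap : (ZMod n → R) →ₗ[R] AdjoinRoot (X ^ n - 1 : R[X]) :=
  Fintype.linearCombination R (rootChar n)

theorem cyclicMap_shift (f : ZMod n → R) (a : ZMod n) :
    cyclicMap n (fun i => f (i + a)) = rootChar n (-a) * cyclicMap n f := by
  simp only [cyclicMap, Fintype.linearCombination_apply, Finset.mul_sum, mul_smul_comm,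
    ← AddChar.map_add_eq_mul]
  exact Fintype.sum_equiv (Equiv.addRight a) _ _ fun i => by simp

theorem bijective_cyclicMap [Nontrivial R] : Function.Bijective (cyclicMap (R := R) n) := by
  have hmonic : (X ^ n - 1 : R[X]).Monic := monic_X_pow_sub_C 1 (NeZero.ne n)
  have hdeg : (X ^ n - 1 : R[X]).natDegree = n := natDegree_X_pow_sub_C (r := 1)
  refine bijective_of_semiconj_root_mul (T := fun f i => f (i + -1)) hmonic (by simp [hdeg])
    (fun f => ?_) ⟨Pi.single 0 1, ?_⟩
  · have hroot := rootChar_natCast (R := R) n 1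
    rw [Nat.cast_one, pow_one] at hroot
    rw [cyclicMap_shift, neg_neg, hroot]
  · rw [cyclicMap, Fintype.linearCombination_apply_single, one_smul, AddChar.map_zero_eq_one]

end Cyclic

section StepPolynomial

/-- The factor `3X^m - X^{2m} - 1` of `FpolyI`, which is `X^m` times the Laurent polynomial
`3 - X^m - X^{-m}`. -/
noncomputable def stepPolynomial (m : ℕ) : ℤ[X] := 3 * X ^ m - X ^ (2 * m) - 1

theorem FpolyI_eq (k l : ℕ) :
    FpolyI k l = stepPolynomial k * stepPolynomial l - X ^ (k + l) := rfl

theorem natDegree_neg_stepPolynomial_le (m : ℕ) : (-stepPolynomial m).natDegree ≤ 2 * m := by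
  rw [natDegree_neg, stepPolynomial]
  compute_degree
  omega

theorem coeff_neg_stepPolynomial {m : ℕ} (hm : 0 < m) :
    (-stepPolynomial m).coeff (2 * m) = 1 := by
  have h1 : 2 * m ≠ m := by omega
  have h2 : 2 * m ≠ 0 := by omega
  rw [stepPolynomial, coeff_neg, coeff_sub, coeff_sub, coeff_ofNat_mul, coeff_X_pow, coeff_X_pow,
    coeff_one, if_neg h1, if_pos rfl, if_neg h2]
  norm_num

theorem monic_neg_stepPolynomial {m : ℕ} (hm : 0 < m) : (-stepPolynomial m).Monic :=
  monic_of_natDegree_le_of_coeff_eq_one _ (natDegree_neg_stepPolynomial_le m)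
    (coeff_neg_stepPolynomial hm)

theorem natDegree_neg_stepPolynomial {m : ℕ} (hm : 0 < m) :
    (-stepPolynomial m).natDegree = 2 * m :=
  natDegree_eq_of_le_of_coeff_ne_zero (natDegree_neg_stepPolynomial_le m)
    (by rw [coeff_neg_stepPolynomial hm]; exact one_ne_zero)

theorem monic_natDegree_FpolyI {k l : ℕ} (hk : 0 < k) (hl : 0 < l) :
    (FpolyI k l).Monic ∧ (FpolyI k l).natDegree = 2 * (k + l) := by
  have hmul := (monic_neg_stepPolynomial hk).mul (monic_neg_stepPolynomial hl)
  have hdeg : (-stepPolynomial k * -stepPolynomial l).natDegree = 2 * (k + l) := by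
    rw [(monic_neg_stepPolynomial hk).natDegree_mul (monic_neg_stepPolynomial hl),
      natDegree_neg_stepPolynomial hk, natDegree_neg_stepPolynomial hl, mul_add]
  have hlt : (X ^ (k + l) : ℤ[X]).natDegree
      < (-stepPolynomial k * -stepPolynomial l).natDegree := by
    rw [natDegree_X_pow, hdeg]
    omega
  rw [FpolyI_eq, ← neg_mul_neg]
  exact ⟨hmul.sub_of_left (degree_lt_degree hlt),
    (natDegree_sub_eq_left_of_natDegree_lt hlt).trans hdeg⟩

end StepPolynomial

section Laplacian

variable {n k l : ℕ} [NeZero n]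

theorem natCast_ne_zero_of_not_dvd_two_mul {n m : ℕ} (hm : ¬n ∣ 2 * m) : (m : ZMod n) ≠ 0 :=
  fun h => hm (dvd_mul_of_dvd_right ((ZMod.natCast_eq_zero_iff m n).mp h) 2)

theorem add_natCast_ne_sub_natCast {n m : ℕ} (hm : ¬n ∣ 2 * m) (i : ZMod n) :
    i + (m : ZMod n) ≠ i - m := fun h => by
  refine hm ((ZMod.natCast_eq_zero_iff _ _).mp ?_)
  push_cast
  linear_combination h

theorem ne_and_eq_add_iff {G : Type*} [AddGroup G] {a : G} (ha : a ≠ 0) (i j : G) :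
    i ≠ j ∧ (j = i + a ∨ i = j + a) ↔ j = i + a ∨ j = i - a := by
  rw [← sub_eq_iff_eq_add (b := a) (a := i), eq_comm (a := i - a)]
  refine and_iff_right_of_imp ?_
  rintro (rfl | rfl)
  · simpa using ha
  · simpa [eq_comm (a := i), sub_eq_self] using ha

theorem neighborFinset_IGraph_inl (hl : ¬n ∣ 2 * l) (i : ZMod n) :
    (IGraph n k l).neighborFinset (.inl i) = {.inl (i + l), .inl (i - l), .inr i} := by
  have hstep := ne_and_eq_add_iff (natCast_ne_zero_of_not_dvd_two_mul hl) i
  ext (j | j) <;> rw [SimpleGraph.mem_neighborFinset]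
  · simpa [IGraph, IRel] using hstep j
  · simp [IGraph, IRel, eq_comm]

theorem neighborFinset_IGraph_inr (hk : ¬n ∣ 2 * k) (i : ZMod n) :
    (IGraph n k l).neighborFinset (.inr i) = {.inr (i + k), .inr (i - k), .inl i} := by
  have hstep := ne_and_eq_add_iff (natCast_ne_zero_of_not_dvd_two_mul hk) i
  ext (j | j) <;> rw [SimpleGraph.mem_neighborFinset]
  · simp [IGraph, IRel]
  · simpa [IGraph, IRel] using hstep j

theorem lapMatrix_mulVec_of_neighborFinset_eq {V R : Type*} [Fintype V] [DecidableEq V]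
    [NonAssocRing R] {G : SimpleGraph V} [DecidableRel G.Adj] {v a b c : V}
    (h : G.neighborFinset v = {a, b, c}) (hab : a ≠ b) (hac : a ≠ c) (hbc : b ≠ c) (f : V → R) :
    (G.lapMatrix R).mulVec f v = 3 * f v - f a - f b - f c := by
  have ha : a ∉ ({b, c} : Finset V) := by simp [hab, hac]
  have hb : b ∉ ({c} : Finset V) := by simp [hbc]
  rw [SimpleGraph.lapMatrix_mulVec_apply, ← SimpleGraph.card_neighborFinset_eq_degree, h,
    Finset.sum_insert ha, Finset.sum_insert hb, Finset.sum_singleton,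
    Finset.card_insert_of_notMem ha, Finset.card_insert_of_notMem hb, Finset.card_singleton]
  push_cast
  abel

/-- `3 - x^m - x^{-m}`: the element of `ℤ[X] / (X^n - 1)` through which the operator
`f ↦ 3 f - f(· + m) - f(· - m)` acts. -/
noncomputable def stepSymbol (n m : ℕ) [NeZero n] : AdjoinRoot (X ^ n - 1 : ℤ[X]) :=
  3 - rootChar n m - rootChar n (-m)

theorem cyclicMap_step (m : ℕ) (f : ZMod n → ℤ) :
    cyclicMap n (fun i => 3 * f i - f (i + m) - f (i - m)) = stepSymbol n m * cyclicMap n f := by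
  have hfun : (fun i => 3 * f i - f (i + m) - f (i - m))
      = (3 : ℤ) • f - (fun i => f (i + m)) - fun i => f (i + -m) := by
    ext i
    simp [sub_eq_add_neg]
  rw [hfun, map_sub, map_sub, map_smul, cyclicMap_shift, cyclicMap_shift, neg_neg, stepSymbol,
    zsmul_eq_mul]
  push_cast
  ring

/-- The pair of group-algebra elements given by the values of a function on the `u_i` and on the
`v_i`. -/
noncomputable def vertexMap (n : ℕ) [NeZero n] : (ZMod n ⊕ ZMod n → ℤ) →ₗ[ℤ]
    AdjoinRoot (X ^ n - 1 : ℤ[X]) × AdjoinRoot (X ^ n - 1 : ℤ[X]) :=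
  (cyclicMap n ∘ₗ LinearMap.funLeft ℤ ℤ Sum.inl).prod
    (cyclicMap n ∘ₗ LinearMap.funLeft ℤ ℤ Sum.inr)

theorem bijective_vertexMap : Function.Bijective (vertexMap n) :=
  ((bijective_cyclicMap n).prodMap (bijective_cyclicMap n)).comp
    (Equiv.sumArrowEquivProdArrow (ZMod n) (ZMod n) ℤ).bijective

theorem semiconj_vertexMap_lapI (hk : ¬n ∣ 2 * k) (hl : ¬n ∣ 2 * l) :
    Function.Semiconj (vertexMap n) (lapI n k l ℤ).mulVecLin
      (fun p => (stepSymbol n l * p.1 - p.2, stepSymbol n k * p.2 - p.1)) := fun f => by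
  have hu : (lapI n k l ℤ).mulVecLin f ∘ Sum.inl
      = (fun i => 3 * f (.inl i) - f (.inl (i + l)) - f (.inl (i - l))) - f ∘ Sum.inr :=
    funext fun i => lapMatrix_mulVec_of_neighborFinset_eq (neighborFinset_IGraph_inl hl i)
      (by simpa using add_natCast_ne_sub_natCast hl i) (by simp) (by simp) f
  have hv : (lapI n k l ℤ).mulVecLin f ∘ Sum.inr
      = (fun i => 3 * f (.inr i) - f (.inr (i + k)) - f (.inr (i - k))) - f ∘ Sum.inl :=
    funext fun i => lapMatrix_mulVec_of_neighborFinset_eq (neighborFinset_IGraph_inr hk i)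
      (by simpa using add_natCast_ne_sub_natCast hk i) (by simp) (by simp) f
  refine Prod.ext ?_ ?_
  · change cyclicMap n ((lapI n k l ℤ).mulVecLin f ∘ Sum.inl) = _
    rw [hu, map_sub]
    exact congrArg (· - _) (cyclicMap_step l (f ∘ Sum.inl))
  · change cyclicMap n ((lapI n k l ℤ).mulVecLin f ∘ Sum.inr) = _
    rw [hv, map_sub]
    exact congrArg (· - _) (cyclicMap_step k (f ∘ Sum.inr))

/-- The cokernel of the Laplacian of `I(n,k,l)` is cyclic over `ℤ[X] / (X^n - 1)`. -/
noncomputable def cokerLapIEquiv (hk : ¬n ∣ 2 * k) (hl : ¬n ∣ 2 * l) :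
    cokerM (lapI n k l ℤ) ≃+ AdjoinRoot (X ^ n - 1 : ℤ[X]) ⧸
      Ideal.span {stepSymbol n l * stepSymbol n k - 1} :=
  let ψ := (Ideal.Quotient.mkₐ ℤ (Ideal.span {stepSymbol n l * stepSymbol n k - 1})).toLinearMap ∘ₗ
    LinearMap.coprod LinearMap.id (LinearMap.mulLeft ℤ (stepSymbol n l)) ∘ₗ vertexMap n
  have hψ : Function.Exact (lapI n k l ℤ).mulVecLin ψ :=
    exact_comp_of_semiconj (e := vertexMap n) bijective_vertexMap (semiconj_vertexMap_lapI hk hl)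
      (exact_mul_sub_swap_mk _ _)
  have hadd : Function.Surjective
      (LinearMap.coprod LinearMap.id (LinearMap.mulLeft ℤ (stepSymbol n l))) :=
    fun c => ⟨(c, 0), by simp⟩
  have hsurj : Function.Surjective ψ :=
    Ideal.Quotient.mk_surjective.comp (hadd.comp bijective_vertexMap.surjective)
  (hψ.linearEquivOfSurjective hsurj).toAddEquiv

theorem mk_stepPolynomial (m : ℕ) :
    AdjoinRoot.mk (X ^ n - 1 : ℤ[X]) (stepPolynomial m) = rootChar n m * stepSymbol n m := by
  rw [stepPolynomial, stepSymbol]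
  simp only [map_sub, map_mul, map_pow, map_ofNat, map_one, AdjoinRoot.mk_X, mul_comm 2 m, pow_mul,
    ← rootChar_natCast (R := ℤ)]
  linear_combination rootChar_mul_rootChar_neg (R := ℤ) n (m : ZMod n)

theorem mk_FpolyI (k l : ℕ) : AdjoinRoot.mk (X ^ n - 1 : ℤ[X]) (FpolyI k l)
    = rootChar n (k + l : ℕ) * (stepSymbol n l * stepSymbol n k - 1) := by
  rw [FpolyI_eq, map_sub, map_mul, mk_stepPolynomial, mk_stepPolynomial, map_pow, AdjoinRoot.mk_X,
    ← rootChar_natCast (R := ℤ) n, Nat.cast_add, AddChar.map_add_eq_mul]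
  ring

theorem span_mk_FpolyI (k l : ℕ) :
    Ideal.span {AdjoinRoot.mk (X ^ n - 1 : ℤ[X]) (FpolyI k l)}
      = Ideal.span {stepSymbol n l * stepSymbol n k - 1} := by
  rw [mk_FpolyI]
  exact Ideal.span_singleton_mul_left_unit
    (IsUnit.of_mul_eq_one _ (rootChar_mul_rootChar_neg (R := ℤ) n _)) _

end Laplacian

theorem jacobian_IGraph_iso_general {n k l : ℕ} [NeZero n] (hk : ¬n ∣ 2 * k) (hl : ¬n ∣ 2 * l) :
    Nonempty (cokerM (lapI n k l ℤ) ≃+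
      cokerM (companionM (FpolyI k l) (2 * (k + l)) ^ n - 1)) := by
  have hk0 : 0 < k := Nat.pos_of_ne_zero fun h => hk (by simp [h])
  have hl0 : 0 < l := Nat.pos_of_ne_zero fun h => hl (by simp [h])
  obtain ⟨hmonic, hdeg⟩ := monic_natDegree_FpolyI hk0 hl0
  obtain ⟨s, hs⟩ : ∃ s, 2 * (k + l) = s + 1 := Nat.exists_eq_add_one.mpr (by omega)
  rw [hs] at hdeg ⊢
  exact ⟨(cokerLapIEquiv hk hl).trans <|
    (Ideal.quotEquivOfEq (span_mk_FpolyI k l).symm).toAddEquiv.trans <|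
      (adjoinRootQuotientComm (X ^ n - 1) (FpolyI k l)).toAddEquiv.trans
        (cokerCompanionEquiv hmonic hdeg n).symm⟩

/-- The Jacobian group of the I-graph `I(n,k,l)` (the torsion subgroup of the cokernel of
its Laplacian) is isomorphic as an abelian group to the torsion subgroup of the cokernel
of `𝒜^n - I`, where `𝒜` is the companion matrix of
`F(X) = (3X^k - X^{2k} - 1)(3X^l - X^{2l} - 1) - X^{k+l}`. -/
theorem jacobian_IGraph_iso (n k l : ℕ) [NeZero n]
    (hk : 1 ≤ k) (hkl : k ≤ l) (hn : 2 * l < n) :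
    Nonempty ((JacI n k l) ≃+
      AddCommGroup.torsion (cokerM (companionM (FpolyI k l) (2 * (k + l)) ^ n - 1))) := by
  have hk' : ¬n ∣ 2 * k := Nat.not_dvd_of_pos_of_lt (by omega) (by omega)
  have hl' : ¬n ∣ 2 * l := Nat.not_dvd_of_pos_of_lt (by omega) (by omega)
  obtain ⟨e⟩ := jacobian_IGraph_iso_general hk' hl'
  exact ⟨(e.addSubgroupMap _).trans (AddEquiv.addSubgroupCongr e.map_torsion)⟩
end

section
/- Let n, k, l be integers with 1 ≤ k ≤ l and 2l < n, and set ε_n = exp(2πi/n). Then the number of spanning trees of the I-graph I(n,k,l) satisfies, in ℂ, n·τ_{k,l}(n) = ∏_{j=1}^{n−1} ((3 − ε_n^{jk} − ε_n^{−jk})(3 − ε_n^{jl} − ε_n^{−jl}) − 1). -/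
open Polynomial

/-!
A spanning tree rooted at `r` is the same as a map sending each vertex `v ≠ r` to its parent, a
neighbour of `v`, such that all orbits end at `r`. Expanding `det` multilinearly in the rows of the
Laplacian (row `r` replaced by a unit vector) gives a sum over all maps `p` choosing a neighbour of
each `v ≠ r`; the determinant attached to `p` is `1` if all orbits of `p` reach `r` and `0`
otherwise. This is the matrix tree theorem.

Since the Laplacian `L` has zero row and column sums, `det (L + a bᵀ) = (∑ a) (∑ b) τ`. For the
I-graph, with `a = b` the indicator of the `u`-vertices, `L + a bᵀ` has circulant diagonal blocks
and off-diagonal blocks `-1`. All blocks are diagonalised by the discrete Fourier transform, so the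
determinant is a product over `m : ZMod n`, in which the factor at `m = 0` is `n`.
-/

/-! ### Rooted trees as parent maps -/

/-- `g` is the parent map of a tree rooted at `r`, with the convention that the root is its own
parent: all orbits of `g` end at the fixed point `r`. -/
structure IsParentMap {V : Type*} (r : V) (g : V → V) : Prop where
  map_root : g r = r
  reaches_root : ∀ v, ∃ m : ℕ, g^[m] v = r

/-- The graph joining every point to its image under `g`. -/
def functionalGraph {V : Type*} (g : V → V) : SimpleGraph V :=
  SimpleGraph.fromRel fun v w => g v = w

theorem functionalGraph_adj {V : Type*} {g : V → V} {v w : V} :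
    (functionalGraph g).Adj v w ↔ v ≠ w ∧ (g v = w ∨ g w = v) :=
  SimpleGraph.fromRel_adj _ v w

theorem functionalGraph_adj_apply {V : Type*} {g : V → V} {v : V} (hv : g v ≠ v) :
    (functionalGraph g).Adj v (g v) :=
  functionalGraph_adj.2 ⟨hv.symm, .inl rfl⟩

namespace IsParentMap

variable {V : Type*} {r : V} {g g' : V → V}

theorem of_depth {d : V → ℕ} (hr : g r = r) (hd : ∀ v, v ≠ r → d (g v) < d v) :
    IsParentMap r g := by
  refine ⟨hr, fun v => ?_⟩
  induction v using (measure d).wf.induction with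
  | _ v ih =>
    by_cases hv : v = r
    · exact ⟨0, hv⟩
    · obtain ⟨m, hm⟩ := ih (g v) (hd v hv)
      exact ⟨m + 1, hm⟩

theorem exists_depth (hg : IsParentMap r g) : ∃ d : V → ℕ, ∀ v, v ≠ r → d (g v) < d v := by
  classical
  refine ⟨fun v => Nat.find (hg.reaches_root v), fun v hv => ?_⟩
  obtain ⟨m, hm⟩ := Nat.exists_eq_succ_of_ne_zero
    (n := Nat.find (hg.reaches_root v)) (by simpa using hv)
  have hspec := Nat.find_spec (hg.reaches_root v)
  change Nat.find (hg.reaches_root (g v)) < Nat.find (hg.reaches_root v)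
  rw [hm] at hspec ⊢
  exact Nat.lt_succ_of_le (Nat.find_min' _ hspec)

theorem induction (hg : IsParentMap r g) {P : V → Prop} (root : P r)
    (step : ∀ v, v ≠ r → P (g v) → P v) (v : V) : P v := by
  obtain ⟨d, hd⟩ := hg.exists_depth
  induction v using (measure d).wf.induction with
  | _ v ih =>
    by_cases hv : v = r
    · exact hv ▸ root
    · exact step v hv (ih (g v) (hd v hv))

theorem apply_ne_self (hg : IsParentMap r g) {v : V} (hv : v ≠ r) : g v ≠ v := by
  obtain ⟨d, hd⟩ := hg.exists_depth
  exact fun h => (hd v hv).ne (congrArg d h)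

theorem apply_apply_ne_self (hg : IsParentMap r g) {v : V} (hv : v ≠ r) : g (g v) ≠ v := by
  obtain ⟨d, hd⟩ := hg.exists_depth
  intro h
  by_cases hgv : g v = r
  · exact hv (by rw [← h, hgv, hg.map_root])
  · exact ((hd (g v) hgv).trans (hd v hv)).ne (congrArg d h)

theorem functionalGraph_connected (hg : IsParentMap r g) : (functionalGraph g).Connected := by
  have reachable_root : ∀ v, (functionalGraph g).Reachable v r :=
    hg.induction (.refl _) fun v hv ih =>
      (functionalGraph_adj_apply (hg.apply_ne_self hv)).reachable.trans ih
  have : Nonempty V := ⟨r⟩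
  exact .mk fun v w => (reachable_root v).trans (reachable_root w).symm

theorem eq_of_functionalGraph_le (hg : IsParentMap r g) (hg' : IsParentMap r g')
    (h : functionalGraph g' ≤ functionalGraph g) : g' = g := by
  funext v
  induction v using hg'.induction with
  | root => rw [hg.map_root, hg'.map_root]
  | step v hv ih =>
    rcases (functionalGraph_adj.1 (h (functionalGraph_adj_apply (hg'.apply_ne_self hv)))).2 with
      hup | hdown
    · exact hup.symm
    · exact absurd (ih.trans hdown) (hg'.apply_apply_ne_self hv)

theorem functionalGraph_le_iff (hg : IsParentMap r g) {G : SimpleGraph V} :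
    functionalGraph g ≤ G ↔ ∀ v, v ≠ r → G.Adj v (g v) := by
  refine ⟨fun h v hv => h (functionalGraph_adj_apply (hg.apply_ne_self hv)), fun h v w hvw => ?_⟩
  have adj_of_apply_eq : ∀ v w, v ≠ w → g v = w → G.Adj v w := by
    rintro v _ hne rfl
    exact h v fun hv => hne (by rw [hv, hg.map_root])
  obtain ⟨hne, hup | hdown⟩ := functionalGraph_adj.1 hvw
  · exact adj_of_apply_eq v w hne hup
  · exact (adj_of_apply_eq w v hne.symm hdown).symm

end IsParentMap

section SpanningTrees

variable {V : Type*}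

theorem exists_isParentMap_functionalGraph_le {T : SimpleGraph V} (hT : T.Connected) (r : V) :
    ∃ g, IsParentMap r g ∧ functionalGraph g ≤ T := by
  have exists_closer : ∀ v, ∃ w, (v = r → w = r) ∧
      (v ≠ r → T.Adj v w ∧ T.dist w r < T.dist v r) := by
    intro v
    by_cases hv : v = r
    · exact ⟨r, fun _ => rfl, fun h => absurd hv h⟩
    obtain ⟨p, hp⟩ := hT.exists_walk_length_eq_dist v r
    cases p with
    | nil => exact absurd rfl hv
    | @cons _ w _ hadj q =>
      rw [SimpleGraph.Walk.length_cons] at hp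
      refine ⟨w, fun h => absurd h hv, fun _ => ⟨hadj, ?_⟩⟩
      exact hp ▸ Nat.lt_succ_of_le (SimpleGraph.dist_le q)
  choose g hroot hcloser using exists_closer
  have hg : IsParentMap r g := .of_depth (d := fun v => T.dist v r) (hroot r rfl)
    fun v hv => (hcloser v hv).2
  exact ⟨g, hg, hg.functionalGraph_le_iff.2 fun v hv => (hcloser v hv).1⟩

theorem IsParentMap.functionalGraph_isTree {r : V} {g : V → V} (hg : IsParentMap r g) :
    (functionalGraph g).IsTree := by
  refine SimpleGraph.isTree_of_minimal_connected ⟨hg.functionalGraph_connected, fun T hT hle => ?_⟩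
  obtain ⟨g', hg', hle'⟩ := exists_isParentMap_functionalGraph_le hT r
  rwa [hg.eq_of_functionalGraph_le hg' (hle'.trans hle)] at hle'

theorem exists_isParentMap_functionalGraph_eq {T : SimpleGraph V} (hT : T.IsTree) (r : V) :
    ∃ g, IsParentMap r g ∧ functionalGraph g = T := by
  obtain ⟨g, hg, hle⟩ := exists_isParentMap_functionalGraph_le hT.connected r
  exact ⟨g, hg, hle.antisymm
    ((SimpleGraph.isTree_iff_minimal_connected.1 hT).2 hg.functionalGraph_connected hle)⟩

/-- The number of spanning trees of `G`, counted as subgraphs on all vertices. As for every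
`Nat.card`, the value is `0` if there are infinitely many. -/
noncomputable def numSpanningTrees (G : SimpleGraph V) : ℕ :=
  Nat.card {H : G.Subgraph // H.IsSpanning ∧ H.coe.IsTree}

theorem numSpanningTrees_eq_card_isTree_le (G : SimpleGraph V) :
    numSpanningTrees G = Nat.card {T : SimpleGraph V // T ≤ G ∧ T.IsTree} :=
  Nat.card_congr
    { toFun := fun H => ⟨H.1.spanningCoe, H.1.spanningCoe_le,
        (H.1.spanningCoeEquivCoeOfSpanning H.2.1).isTree_iff.2 H.2.2⟩
      invFun := fun T => ⟨SimpleGraph.toSubgraph T.1 T.2.1, SimpleGraph.toSubgraph.isSpanning _ _,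
        (SimpleGraph.Subgraph.spanningCoeEquivCoeOfSpanning _
          (SimpleGraph.toSubgraph.isSpanning _ _)).isTree_iff.1 T.2.2⟩
      left_inv := fun H => Subtype.ext
        (SimpleGraph.Subgraph.ext H.2.1.verts_eq_univ.symm rfl)
      right_inv := fun _ => rfl }

theorem numSpanningTrees_eq_card_isParentMap (G : SimpleGraph V) (r : V) :
    numSpanningTrees G =
      Nat.card {g : V → V // IsParentMap r g ∧ ∀ v, v ≠ r → G.Adj v (g v)} := by
  rw [numSpanningTrees_eq_card_isTree_le]
  symm
  refine Nat.card_eq_of_bijective (fun g => ⟨functionalGraph g.1,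
    g.2.1.functionalGraph_le_iff.2 g.2.2, g.2.1.functionalGraph_isTree⟩) ⟨?_, ?_⟩
  · rintro ⟨g, hg, _⟩ ⟨g', hg', _⟩ heq
    exact Subtype.ext (hg'.eq_of_functionalGraph_le hg (Subtype.mk.inj heq).le)
  · rintro ⟨T, hle, hT⟩
    obtain ⟨g, hg, rfl⟩ := exists_isParentMap_functionalGraph_eq hT r
    exact ⟨⟨g, hg, hg.functionalGraph_le_iff.1 hle⟩, rfl⟩

end SpanningTrees

/-! ### The matrix tree theorem -/

section MatrixTree

open Matrix

variable {V R : Type*} [Fintype V] [DecidableEq V] [CommRing R]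

theorem det_eq_zero_of_mulVec_eq_zero {M : Matrix V V R} {x : V → R} (hM : M *ᵥ x = 0) {i : V}
    (hi : x i = 1) : M.det = 0 := by
  have h : (M.adjugate * M) *ᵥ x = 0 := by rw [← mulVec_mulVec, hM, mulVec_zero]
  rw [adjugate_mul, smul_mulVec, one_mulVec] at h
  simpa [hi] using congrFun h i

/-- Row `v` of the Laplacian of a single arc `v → u`; at the root `r` it is replaced by a unit
vector. These rows are the terms in the multilinear expansion of the determinant. -/
def parentRow (R : Type*) [CommRing R] (r v u : V) : V → R :=
  if v = r then Pi.single r 1 else Pi.single v 1 - Pi.single u 1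

/-- The Laplacian of the arcs `v → p v`, with row `r` replaced by a unit vector. -/
def parentMatrix (R : Type*) [CommRing R] (r : V) (p : V → V) : Matrix V V R :=
  of fun v => parentRow R r v (p v)

theorem parentMatrix_mulVec (r : V) (p : V → V) (x : V → R) (v : V) :
    (parentMatrix R r p *ᵥ x) v = if v = r then x v else x v - x (p v) := by
  change parentRow R r v (p v) ⬝ᵥ x = _
  unfold parentRow
  split_ifs with hv <;> simp [sub_dotProduct, hv]

/-- With respect to the depth in the tree, the matrix is block triangular with identity blocks on
the diagonal. -/
theorem IsParentMap.det_parentMatrix {r : V} {p : V → V} (hp : IsParentMap r p) :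
    (parentMatrix R r p).det = 1 := by
  obtain ⟨d, hd⟩ := hp.exists_depth
  have apply_of_depth_le : ∀ v u, d v ≤ d u → parentMatrix R r p v u = (1 : Matrix V V R) v u := by
    intro v u hvu
    by_cases hv : v = r
    · simp [parentMatrix, parentRow, hv, one_eq_pi_single]
    · have hu : u ≠ p v := fun h => (hd v hv).not_ge (h ▸ hvu)
      simp [parentMatrix, parentRow, hv, hu, one_eq_pi_single]
  have triangular : (parentMatrix R r p)ᵀ.BlockTriangular d := fun u v hvu => by
    rw [transpose_apply, apply_of_depth_le v u hvu.le, one_apply_ne (ne_of_apply_ne d hvu.ne)]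
  rw [← det_transpose, triangular.det]
  refine Finset.prod_eq_one fun k _ => ?_
  have block_eq_one : (parentMatrix R r p)ᵀ.toSquareBlock d k = 1 := by
    ext u v
    rw [toSquareBlock_def, of_apply, transpose_apply,
      apply_of_depth_le _ _ (v.2.trans u.2.symm).le]
    simp [Matrix.one_apply, Subtype.ext_iff, eq_comm]
  rw [block_eq_one, det_one]

/-- The indicator of the vertices whose orbits avoid `r` lies in the kernel. -/
theorem det_parentMatrix_of_not_isParentMap {r : V} {p : V → V} (hr : p r = r)
    (hp : ¬ IsParentMap r p) : (parentMatrix R r p).det = 0 := by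
  classical
  obtain ⟨v, hv⟩ : ∃ v, ¬ ∃ m : ℕ, p^[m] v = r := by
    by_contra! h
    exact hp ⟨hr, h⟩
  refine det_eq_zero_of_mulVec_eq_zero (x := fun w => if ∃ m : ℕ, p^[m] w = r then 0 else 1)
    (funext fun w => ?_) (if_neg hv)
  rw [parentMatrix_mulVec]
  by_cases hw : w = r
  · rw [if_pos hw]
    exact if_pos ⟨0, hw⟩
  · have reaches_iff : (∃ m : ℕ, p^[m] w = r) ↔ ∃ m : ℕ, p^[m] (p w) = r := by
      refine ⟨?_, fun ⟨m, hm⟩ => ⟨m + 1, hm⟩⟩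
      rintro ⟨_ | m, hm⟩
      · exact absurd hm hw
      · exact ⟨m, hm⟩
    simp only [if_neg hw, reaches_iff, sub_self, Pi.zero_apply]

theorem updateRow_laplacian_apply (w : Matrix V V R) (r v : V) :
    (diagonal (w *ᵥ 1) - w).updateRow r (Pi.single r 1) v =
      ∑ u, w.updateRow r (Pi.single r 1) v u • parentRow R r v u := by
  by_cases hv : v = r
  · subst hv
    simp [parentRow, Pi.single_apply]
  · funext j
    simp [parentRow, hv, Finset.sum_apply, mulVec, dotProduct, diagonal_apply, Pi.single_apply,
      mul_sub, Finset.sum_sub_distrib, eq_comm]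

/-- Tutte's **directed matrix tree theorem**: `w v u` is the weight of the arc `v → u`, and the sum
runs over the spanning trees with all arcs oriented towards the root `r`. -/
theorem det_updateRow_laplacian_eq_sum_isParentMap (w : Matrix V V R) (r : V)
    [DecidablePred (IsParentMap r)] :
    ((diagonal (w *ᵥ 1) - w).updateRow r (Pi.single r 1)).det =
      ∑ p with IsParentMap r p, ∏ v ∈ Finset.univ.erase r, w v (p v) := by
  calc ((diagonal (w *ᵥ 1) - w).updateRow r (Pi.single r 1)).det
    _ = detRowAlternating fun v => ∑ u, w.updateRow r (Pi.single r 1) v u • parentRow R r v u :=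
      congrArg detRowAlternating (funext (updateRow_laplacian_apply w r))
    _ = ∑ p : V → V, (∏ v, w.updateRow r (Pi.single r 1) v (p v)) * (parentMatrix R r p).det :=
      (detRowAlternating.toMultilinearMap.map_sum _).trans
        (Finset.sum_congr rfl fun p _ => detRowAlternating.toMultilinearMap.map_smul_univ _ _)
    _ = ∑ p : V → V, if IsParentMap r p then ∏ v ∈ Finset.univ.erase r, w v (p v) else 0 := ?_
    _ = _ := (Finset.sum_filter _ _).symm
  refine Finset.sum_congr rfl fun p _ => ?_
  rw [← Finset.mul_prod_erase _ _ (Finset.mem_univ r), Finset.prod_congr rfl fun v hv => by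
    rw [updateRow_ne (Finset.ne_of_mem_erase hv)], updateRow_self]
  split_ifs with hp
  · rw [hp.map_root, hp.det_parentMatrix, Pi.single_eq_same, one_mul, mul_one]
  · by_cases hr : p r = r
    · rw [det_parentMatrix_of_not_isParentMap hr hp, mul_zero]
    · rw [Pi.single_eq_of_ne hr, zero_mul, zero_mul]

variable (G : SimpleGraph V) [DecidableRel G.Adj]

theorem lapMatrix_eq_diagonal_sub_adjMatrix :
    G.lapMatrix R = diagonal (G.adjMatrix R *ᵥ 1) - G.adjMatrix R := by
  have degree_eq : (fun v => (G.degree v : R)) = G.adjMatrix R *ᵥ 1 := by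
    funext v
    simp [SimpleGraph.adjMatrix_mulVec_apply]
  rw [SimpleGraph.lapMatrix, SimpleGraph.degMatrix, degree_eq]

/-- Kirchhoff's **matrix tree theorem**. -/
theorem det_updateRow_lapMatrix_single (r : V) :
    ((G.lapMatrix R).updateRow r (Pi.single r 1)).det = numSpanningTrees G := by
  classical
  rw [lapMatrix_eq_diagonal_sub_adjMatrix, det_updateRow_laplacian_eq_sum_isParentMap,
    numSpanningTrees_eq_card_isParentMap G r, Nat.card_eq_fintype_card, Fintype.card_subtype,
    ← Finset.filter_filter, ← Finset.sum_boole]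
  simp [SimpleGraph.adjMatrix_apply, Finset.prod_boole]

theorem det_updateRow_of_mulVec_one_eq_zero {A : Matrix V V R} (hA : A *ᵥ 1 = 0) (r : V)
    (x : V → R) :
    (A.updateRow r x).det = (∑ v, x v) * (A.updateRow r (Pi.single r 1)).det := by
  set y : V → R := (∑ v, x v) • Pi.single r 1 with hy
  have det_sub : (A.updateRow r (x - y)).det = 0 := by
    refine det_eq_zero_of_mulVec_eq_zero (x := 1) (funext fun v => ?_) (i := r) rfl
    by_cases hv : v = r
    · subst hv
      simp [mulVec, dotProduct, hy, Finset.sum_sub_distrib, ← Finset.mul_sum]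
    · simpa [mulVec, hv] using congrFun hA v
  calc (A.updateRow r x).det
    _ = (A.updateRow r (x - y + y)).det := by rw [sub_add_cancel]
    _ = (A.updateRow r y).det := by rw [det_updateRow_add, det_sub, zero_add]
    _ = _ := det_updateRow_smul ..

theorem det_add_vecMulVec_of_mulVec_one_eq_zero {A : Matrix V V R} (hA : A *ᵥ 1 = 0)
    (hA' : 1 ᵥ* A = 0) (r : V) (a b : V → R) :
    (A + vecMulVec a b).det =
      (∑ v, a v) * (∑ v, b v) * (A.updateRow r (Pi.single r 1)).det := by
  have sum_rows : ∑ v, (1 : R) • (A + vecMulVec a b) v = (∑ v, a v) • b := by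
    funext w
    have sum_col : ∑ v, A v w = 0 := by simpa [vecMul, dotProduct] using congrFun hA' w
    rw [Finset.sum_apply]
    simp [Finset.sum_add_distrib, sum_col, vecMulVec_apply, Finset.sum_mul]
  have clear_rows : ((A + vecMulVec a b).updateRow r b).det = (A.updateRow r b).det := by
    refine det_eq_of_forall_row_eq_smul_add_const (Function.update a r 0) r
      (Function.update_self ..) fun v w => ?_
    by_cases hv : v = r
    · subst hv
      simp
    · simp [hv, vecMulVec_apply]
  calc (A + vecMulVec a b).det
    _ = ((A + vecMulVec a b).updateRow r ((∑ v, a v) • b)).det := by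
      rw [← sum_rows, det_updateRow_sum, one_smul]
    _ = (∑ v, a v) * (A.updateRow r b).det := by rw [det_updateRow_smul, clear_rows]
    _ = _ := by rw [det_updateRow_of_mulVec_one_eq_zero hA, mul_assoc]

theorem det_lapMatrix_add_vecMulVec [Nonempty V] (a b : V → R) :
    (G.lapMatrix R + vecMulVec a b).det = (∑ v, a v) * (∑ v, b v) * numSpanningTrees G := by
  have row_sums : G.lapMatrix R *ᵥ 1 = 0 := G.lapMatrix_mulVec_const_eq_zero
  have col_sums : 1 ᵥ* G.lapMatrix R = 0 := by
    rw [← mulVec_transpose, (G.isSymm_lapMatrix R).eq, row_sums]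
  rw [det_add_vecMulVec_of_mulVec_one_eq_zero row_sums col_sums (Classical.arbitrary V),
    det_updateRow_lapMatrix_single]

end MatrixTree

/-! ### Diagonalising circulant matrices -/

section Circulant

open Matrix

theorem det_eq_prod_of_mul_eq_diagonal_mul {m R : Type*} [Fintype m] [DecidableEq m] [CommRing R]
    [IsDomain R] {P M : Matrix m m R} {d : m → R} (hP : P.det ≠ 0) (h : P * M = diagonal d * P) :
    M.det = ∏ i, d i := by
  have hdet := congrArg det h
  rw [det_mul, det_mul, det_diagonal, mul_comm] at hdet
  exact mul_right_cancel₀ hP hdet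

theorem det_fromBlocks_neg_one_neg_one {m R : Type*} [Fintype m] [DecidableEq m] [CommRing R]
    (A B : Matrix m m R) : (fromBlocks A (-1) (-1) B).det = (A * B - 1).det := by
  have det_eq_one : (fromBlocks B (-1) 1 0 : Matrix (m ⊕ m) (m ⊕ m) R).det = 1 := by
    have h : (fromBlocks B (-1) 1 0 : Matrix (m ⊕ m) (m ⊕ m) R) =
        fromBlocks 1 (B - 1) 0 1 * fromBlocks 1 (-1) 1 0 := by
      simp [fromBlocks_multiply]
    rw [h, det_mul, det_fromBlocks_zero₂₁, det_fromBlocks_one₁₁]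
    simp
  have h : fromBlocks A (-1) (-1) B * fromBlocks B (-1) 1 0 =
      fromBlocks (A * B - 1) (-A) 0 1 := by
    simp [fromBlocks_multiply, sub_eq_add_neg]
  calc (fromBlocks A (-1) (-1) B).det
    _ = (fromBlocks A (-1) (-1) B * fromBlocks B (-1) 1 0).det := by
      rw [det_mul, det_eq_one, mul_one]
    _ = (A * B - 1).det := by rw [h, det_fromBlocks_zero₂₁, det_one, mul_one]

variable {A K : Type*} [CommRing A] [Fintype A]

section CommRing

variable [CommRing K]

/-- If the characteristic `p` of `K` divided `card A`, there would be `x ≠ 0` in `A` with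
`p x = 0`; as `K` contains no `p`-th roots of unity except `1`, `ψ` would be trivial on `x A`. -/
theorem card_ne_zero_of_isPrimitive [IsDomain K] {ψ : AddChar A K} (hψ : ψ.IsPrimitive) :
    (Fintype.card A : K) ≠ 0 := by
  intro hcard
  obtain ⟨p, hp⟩ := CharP.exists K
  rw [CharP.cast_eq_zero_iff K p] at hcard
  have hp0 : p ≠ 0 := fun h => Fintype.card_ne_zero (zero_dvd_iff.1 (h ▸ hcard))
  have : Fact p.Prime := ⟨(CharP.char_is_prime_or_zero K p).resolve_right hp0⟩
  obtain ⟨x, hx⟩ := exists_prime_addOrderOf_dvd_card p hcard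
  have hx0 : x ≠ 0 := by
    rintro rfl
    exact (Fact.out : p.Prime).one_lt.ne (addOrderOf_zero.symm.trans hx)
  refine hψ hx0 (DFunLike.ext _ _ fun a => frobenius_inj K p ?_)
  have hpx : p • (x * a) = 0 := by
    rw [← smul_mul_assoc, ← hx, addOrderOf_nsmul_eq_zero, zero_mul]
  simp [frobenius_def, AddChar.mulShift_apply, ← AddChar.map_nsmul_eq_pow, hpx]

/-- The matrix of the discrete Fourier transform on `A` with respect to the character `ψ`. -/
def dftMatrix (ψ : AddChar A K) : Matrix A A K :=
  of fun m i => ψ (m * i)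

variable [DecidableEq A]

theorem dftMatrix_mul_circulant (ψ : AddChar A K) (v : A → K) :
    dftMatrix ψ * circulant v = diagonal (dftMatrix ψ *ᵥ v) * dftMatrix ψ := by
  ext m j
  rw [diagonal_mul, mul_apply, mulVec, dotProduct, Finset.sum_mul,
    ← Equiv.sum_comp (Equiv.addRight j)]
  refine Finset.sum_congr rfl fun i _ => ?_
  simp only [dftMatrix, of_apply, circulant_apply, Equiv.coe_addRight, add_sub_cancel_right,
    mul_add, AddChar.map_add_eq_mul]
  ring

variable [IsDomain K] {ψ : AddChar A K}

theorem dftMatrix_mulVec_one (hψ : ψ.IsPrimitive) :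
    dftMatrix ψ *ᵥ 1 = Pi.single 0 (Fintype.card A : K) := by
  funext m
  simp only [mulVec, dotProduct, dftMatrix, of_apply, Pi.one_apply, mul_one, mul_comm m]
  rw [AddChar.sum_mulShift m hψ, Pi.single_apply]
  split_ifs <;> simp

theorem dftMatrix_mul_dftMatrix_inv (hψ : ψ.IsPrimitive) :
    dftMatrix ψ * dftMatrix ψ⁻¹ = (Fintype.card A : K) • 1 := by
  ext m j
  have term_eq : ∀ i, ψ (m * i) * ψ (-(i * j)) = ψ (i * (m - j)) := fun i => by
    rw [← AddChar.map_add_eq_mul]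
    ring_nf
  simp only [mul_apply, dftMatrix, of_apply, AddChar.inv_apply, term_eq]
  rw [AddChar.sum_mulShift _ hψ, Matrix.smul_apply, Matrix.one_apply]
  by_cases hmj : m = j <;> simp [sub_eq_zero, hmj]

theorem det_dftMatrix_ne_zero (hψ : ψ.IsPrimitive) : (dftMatrix ψ).det ≠ 0 := by
  have h := congrArg det (dftMatrix_mul_dftMatrix_inv hψ)
  rw [det_mul, det_smul, det_one, mul_one] at h
  exact left_ne_zero_of_mul (h ▸ pow_ne_zero _ (card_ne_zero_of_isPrimitive hψ))

theorem det_fromBlocks_circulant_neg_one_neg_one_circulant (hψ : ψ.IsPrimitive) (a b : A → K) :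
    (fromBlocks (circulant a) (-1) (-1) (circulant b)).det =
      ∏ m, ((dftMatrix ψ *ᵥ a) m * (dftMatrix ψ *ᵥ b) m - 1) := by
  rw [det_fromBlocks_neg_one_neg_one]
  refine det_eq_prod_of_mul_eq_diagonal_mul (det_dftMatrix_ne_zero hψ) ?_
  calc dftMatrix ψ * (circulant a * circulant b - 1)
    _ = diagonal (dftMatrix ψ *ᵥ a) * (dftMatrix ψ * circulant b) - dftMatrix ψ := by
      rw [Matrix.mul_sub, ← Matrix.mul_assoc, dftMatrix_mul_circulant, Matrix.mul_assoc,
        Matrix.mul_one]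
    _ = (diagonal (dftMatrix ψ *ᵥ a) * diagonal (dftMatrix ψ *ᵥ b) - 1) * dftMatrix ψ := by
      rw [dftMatrix_mul_circulant, ← Matrix.mul_assoc, Matrix.sub_mul, Matrix.one_mul]
    _ = _ := by rw [diagonal_mul_diagonal, ← diagonal_one, diagonal_sub]

end CommRing

/-- The generating vector of the circulant matrix `3 - S - S⁻¹`, where `S` is the shift by `s`. -/
def stepVec (K : Type*) [CommRing K] [DecidableEq A] (s : A) : A → K :=
  Pi.single 0 3 - (Pi.single s 1 + Pi.single (-s) 1)

theorem dftMatrix_mulVec_stepVec [Field K] [DecidableEq A] (ψ : AddChar A K) (s m : A) :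
    (dftMatrix ψ *ᵥ stepVec K s) m = 3 - ψ (m * s) - (ψ (m * s))⁻¹ := by
  simp [stepVec, mulVec_sub, mulVec_add, dftMatrix, AddChar.map_neg_eq_inv, sub_sub]

end Circulant

/-! ### I-graphs -/

namespace IGraph

open Matrix

section Laplacian

variable {n k l : ℕ} {i j : ZMod n}

theorem adj_inl_inl :
    (IGraph n k l).Adj (.inl i) (.inl j) ↔ i ≠ j ∧ (j = i + (l : ZMod n) ∨ i = j + l) := by
  simp [IGraph, IRel]

theorem adj_inr_inr :
    (IGraph n k l).Adj (.inr i) (.inr j) ↔ i ≠ j ∧ (j = i + (k : ZMod n) ∨ i = j + k) := by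
  simp [IGraph, IRel]

theorem adj_inl_inr : (IGraph n k l).Adj (.inl i) (.inr j) ↔ i = j := by
  simp [IGraph, IRel]

theorem adj_inr_inl : (IGraph n k l).Adj (.inr i) (.inl j) ↔ i = j := by
  rw [SimpleGraph.adj_comm, adj_inl_inr, eq_comm]

/-- For `2 s ≠ 0` the neighbours `i + s` and `i - s` of `i` are distinct from each other and
from `i`. -/
theorem ite_eq_circulant_single_add_single {R : Type*} [CommRing R] {s : ZMod n}
    (hs : 2 * s ≠ 0) (i j : ZMod n) :
    (if i ≠ j ∧ (j = i + s ∨ i = j + s) then 1 else 0) =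
      circulant (Pi.single s 1 + Pi.single (-s) 1 : ZMod n → R) i j := by
  have hs0 : s ≠ 0 := right_ne_zero_of_mul hs
  have hneg : s ≠ -s := fun h => hs (by linear_combination h)
  have hup : j = i + s ↔ i - j = -s := by grind
  have hdown : i = j + s ↔ i - j = s := by grind
  have hne : i ≠ j ↔ i - j ≠ 0 := sub_ne_zero.symm
  simp only [hup, hdown, hne, circulant_apply, Pi.add_apply, Pi.single_apply]
  grind

variable {R : Type*} [CommRing R]

theorem adjMatrix_eq_fromBlocks (hk : 2 * (k : ZMod n) ≠ 0) (hl : 2 * (l : ZMod n) ≠ 0) :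
    (IGraph n k l).adjMatrix R =
      fromBlocks (circulant (Pi.single (l : ZMod n) 1 + Pi.single (-(l : ZMod n)) 1)) 1 1
        (circulant (Pi.single (k : ZMod n) 1 + Pi.single (-(k : ZMod n)) 1)) := by
  ext (i | i) (j | j)
  · simp only [SimpleGraph.adjMatrix_apply, adj_inl_inl, ite_eq_circulant_single_add_single hl,
      fromBlocks_apply₁₁]
  · simp only [SimpleGraph.adjMatrix_apply, adj_inl_inr, fromBlocks_apply₁₂, one_apply]
  · simp only [SimpleGraph.adjMatrix_apply, adj_inr_inl, fromBlocks_apply₂₁, one_apply]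
  · simp only [SimpleGraph.adjMatrix_apply, adj_inr_inr, ite_eq_circulant_single_add_single hk,
      fromBlocks_apply₂₂]

variable [NeZero n]

theorem adjMatrix_mulVec_one (hk : 2 * (k : ZMod n) ≠ 0) (hl : 2 * (l : ZMod n) ≠ 0) :
    (IGraph n k l).adjMatrix R *ᵥ 1 = 3 := by
  have row_sum : ∀ (s i : ZMod n),
      ∑ j, circulant (Pi.single s 1 + Pi.single (-s) 1 : ZMod n → R) i j = 2 := by
    intro s i
    refine (Equiv.sum_comp (Equiv.subLeft i)
      (Pi.single s 1 + Pi.single (-s) 1 : ZMod n → R)).trans ?_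
    simp only [Pi.add_apply, Finset.sum_add_distrib, Finset.sum_pi_single', Finset.mem_univ,
      if_true]
    norm_num
  rw [adjMatrix_eq_fromBlocks hk hl]
  funext v
  rcases v with i | i <;>
  · simp only [mulVec, dotProduct, mul_one, Fintype.sum_sum_type, fromBlocks_apply₁₁,
      fromBlocks_apply₁₂, fromBlocks_apply₂₁, fromBlocks_apply₂₂, row_sum, one_apply,
      Finset.sum_ite_eq, Finset.mem_univ, if_true, Pi.ofNat_apply]
    norm_num

theorem lapMatrix_eq_fromBlocks (hk : 2 * (k : ZMod n) ≠ 0) (hl : 2 * (l : ZMod n) ≠ 0) :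
    (IGraph n k l).lapMatrix R =
      fromBlocks (circulant (stepVec R (l : ZMod n))) (-1) (-1)
        (circulant (stepVec R (k : ZMod n))) := by
  have diagonal_three : diagonal (3 : ZMod n ⊕ ZMod n → R) =
      fromBlocks (circulant (Pi.single 0 3)) 0 0 (circulant (Pi.single 0 3)) := by
    rw [circulant_single, scalar_apply, fromBlocks_diagonal]
    congr 1
    ext (_ | _) <;> rfl
  rw [lapMatrix_eq_diagonal_sub_adjMatrix, adjMatrix_mulVec_one hk hl,
    adjMatrix_eq_fromBlocks hk hl, diagonal_three, sub_eq_add_neg, fromBlocks_neg, fromBlocks_add]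
  simp only [stepVec, circulant_sub, ← sub_eq_add_neg, zero_sub]

end Laplacian

variable {n k l : ℕ} [NeZero n] {K : Type*} [Field K]

theorem natCast_mul_tauI_eq_prod_addChar {ψ : AddChar (ZMod n) K} (hψ : ψ.IsPrimitive)
    (hk : 2 * (k : ZMod n) ≠ 0) (hl : 2 * (l : ZMod n) ≠ 0) :
    (n : K) * tauI n k l =
      ∏ m ∈ Finset.univ.erase (0 : ZMod n),
        ((3 - ψ (m * k) - (ψ (m * k))⁻¹) * (3 - ψ (m * l) - (ψ (m * l))⁻¹) - 1) := by
  have hn : (n : K) ≠ 0 := by simpa [ZMod.card] using card_ne_zero_of_isPrimitive hψ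
  set u : ZMod n ⊕ ZMod n → K := Sum.elim 1 0 with hu
  have sum_u : ∑ v, u v = n := by simp [hu, ZMod.card]
  have perturbed : (IGraph n k l).lapMatrix K + vecMulVec u u =
      fromBlocks (circulant (stepVec K (l : ZMod n) + 1)) (-1) (-1)
        (circulant (stepVec K (k : ZMod n))) := by
    rw [lapMatrix_eq_fromBlocks hk hl]
    ext (i | i) (j | j) <;> simp [hu, vecMulVec_apply]
  have eigenvalue_u : ∀ m, (dftMatrix ψ *ᵥ (stepVec K (l : ZMod n) + 1)) m =
      3 - ψ (m * l) - (ψ (m * l))⁻¹ + (if m = 0 then (n : K) else 0) := fun m => by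
    rw [mulVec_add, Pi.add_apply, dftMatrix_mulVec_stepVec, dftMatrix_mulVec_one hψ, ZMod.card,
      Pi.single_apply]
  have factor_zero : (dftMatrix ψ *ᵥ (stepVec K (l : ZMod n) + 1)) 0 *
      (dftMatrix ψ *ᵥ stepVec K (k : ZMod n)) 0 - 1 = n := by
    rw [eigenvalue_u, dftMatrix_mulVec_stepVec, if_pos rfl]
    simp only [zero_mul, AddChar.map_zero_eq_one, inv_one]
    ring
  have hdet := det_lapMatrix_add_vecMulVec (IGraph n k l) u u
  rw [perturbed, det_fromBlocks_circulant_neg_one_neg_one_circulant hψ,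
    ← Finset.mul_prod_erase _ _ (Finset.mem_univ 0), factor_zero, sum_u,
    mul_assoc] at hdet
  refine (mul_left_cancel₀ hn hdet).symm.trans (Finset.prod_congr rfl fun m hm => ?_)
  rw [eigenvalue_u, dftMatrix_mulVec_stepVec, if_neg (Finset.ne_of_mem_erase hm), add_zero,
    mul_comm (3 - _ - _)]

end IGraph

theorem prod_zmod_erase_zero_eq_prod_Ico {n : ℕ} [NeZero n] {M : Type*} [CommMonoid M]
    (f : ZMod n → M) :
    ∏ m ∈ Finset.univ.erase 0, f m = ∏ j ∈ Finset.Ico 1 n, f (j : ZMod n) := by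
  refine Finset.prod_bij' (fun m _ => m.val) (fun j _ => (j : ZMod n)) (fun m hm => ?_)
    (fun j hj => ?_) (fun m _ => ZMod.natCast_zmod_val m) (fun j hj => ?_) (fun m _ => ?_)
  · have hm0 : m.val ≠ 0 := (ZMod.val_ne_zero m).2 (Finset.ne_of_mem_erase hm)
    exact Finset.mem_Ico.2 ⟨Nat.one_le_iff_ne_zero.2 hm0, m.val_lt⟩
  · obtain ⟨hj0, hjn⟩ := Finset.mem_Ico.1 hj
    refine Finset.mem_erase.2 ⟨?_, Finset.mem_univ _⟩
    rw [Ne, ZMod.natCast_eq_zero_iff]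
    exact Nat.not_dvd_of_pos_of_lt hj0 hjn
  · exact ZMod.val_cast_of_lt (Finset.mem_Ico.1 hj).2
  · rw [ZMod.natCast_zmod_val]

theorem n_mul_tau_IGraph_general {K : Type*} [Field K] {n k l : ℕ} [NeZero n] {ζ : K}
    (hζ : IsPrimitiveRoot ζ n) (hk : ¬ n ∣ 2 * k) (hl : ¬ n ∣ 2 * l) :
    (n : K) * tauI n k l =
      ∏ j ∈ Finset.Ico 1 n,
        ((3 - ζ ^ (j * k) - (ζ ^ (j * k))⁻¹) * (3 - ζ ^ (j * l) - (ζ ^ (j * l))⁻¹) - 1) := by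
  have two_mul_ne_zero : ∀ {s : ℕ}, ¬ n ∣ 2 * s → 2 * (s : ZMod n) ≠ 0 := fun h => by
    rwa [← Nat.cast_ofNat, ← Nat.cast_mul, Ne, ZMod.natCast_eq_zero_iff]
  rw [IGraph.natCast_mul_tauI_eq_prod_addChar (AddChar.zmodChar_primitive_of_primitive_root n hζ)
    (two_mul_ne_zero hk) (two_mul_ne_zero hl), prod_zmod_erase_zero_eq_prod_Ico]
  simp only [← Nat.cast_mul, AddChar.zmodChar_apply']

open Finset in
/-- `n·τ_{k,l}(n) = ∏_{j=1}^{n-1} ((3 - ε^{jk} - ε^{-jk})(3 - ε^{jl} - ε^{-jl}) - 1)`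
in `ℂ`, with `ε = exp(2πi/n)`. -/
theorem n_mul_tau_IGraph (n k l : ℕ) (hk : 1 ≤ k) (hkl : k ≤ l) (hn : 2 * l < n) :
    (n : ℂ) * (tauI n k l : ℂ) =
      ∏ j ∈ Finset.Ico 1 n,
        ((3 - Complex.exp (2 * Real.pi * Complex.I / n) ^ (j * k) -
            (Complex.exp (2 * Real.pi * Complex.I / n) ^ (j * k))⁻¹) *
          (3 - Complex.exp (2 * Real.pi * Complex.I / n) ^ (j * l) -
            (Complex.exp (2 * Real.pi * Complex.I / n) ^ (j * l))⁻¹) - 1) := by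
  have : NeZero n := ⟨by omega⟩
  exact n_mul_tau_IGraph_general (Complex.isPrimitiveRoot_exp n (NeZero.ne n))
    (Nat.not_dvd_of_pos_of_lt (by omega) (by omega)) (Nat.not_dvd_of_pos_of_lt (by omega) hn)
end
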